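/- arXiv:1302.5951 — 3 statements merged into one kernel-verified Lean document; each statement's English description precedes it below -/
import Mathlib

section
/- Let E be a finite-dimensional real inner product space, let f : E → ℝ be twice continuously differentiable, let r₀ > 0, define U(x) = exp(−f(x)) and R(x) = r₀ − exp(−f(x)), and let M : E → ℝ be any function. Then at every point x with R(x) > 0, the inequality 2/R(x) + (2·U(x)/R(x)²)·(−Δf(x) + (1 + U(x)/R(x))·‖∇f(x)‖²) < M(x)/R(x)² holds if and only if −ΔR(x) + R(x)⁻¹‖∇R(x)‖² + R(x) < M(x)/2. -/
/-- The flat Laplacian of a function `g` on a finite-dimensional real inner product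
space: the trace of its second derivative, computed as the sum of the second
derivatives along an orthonormal basis. -/
noncomputable def flatLaplacian {E : Type*} [NormedAddCommGroup E] [InnerProductSpace ℝ E]
    [FiniteDimensional ℝ E] (g : E → ℝ) (x : E) : ℝ :=
  ∑ i, fderiv ℝ (fderiv ℝ g) x (stdOrthonormalBasis ℝ E i) (stdOrthonormalBasis ℝ E i)

/-!
Since `R = φ ∘ f` with `φ t = r₀ - exp (-t)`, `φ' = exp (-t)` and `φ'' = -exp (-t)`, the chain
rule gives `∇R = U ∇f` and `ΔR = U (Δf - ‖∇f‖²)`. Substituting, the left-hand side of the first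
inequality is exactly `2 / R²` times the left-hand side of the second, and the same positive
factor relates the right-hand sides.
-/

open scoped Gradient Laplacian

section SecondDerivative

variable {𝕜 E F G : Type*} [NontriviallyNormedField 𝕜] [NormedAddCommGroup E] [NormedSpace 𝕜 E]
  [NormedAddCommGroup F] [NormedSpace 𝕜 F] [NormedAddCommGroup G] [NormedSpace 𝕜 G]

theorem fderiv_fderiv_comp_apply {g : F → G} {f : E → F} {x : E}
    (hg : ContDiffAt 𝕜 2 g (f x)) (hf : ContDiffAt 𝕜 2 f x) (v w : E) :
    fderiv 𝕜 (fderiv 𝕜 (g ∘ f)) x v w =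
      fderiv 𝕜 (fderiv 𝕜 g) (f x) (fderiv 𝕜 f x v) (fderiv 𝕜 f x w) +
        fderiv 𝕜 g (f x) (fderiv 𝕜 (fderiv 𝕜 f) x v w) := by
  have chain_rule_near : fderiv 𝕜 (g ∘ f) =ᶠ[nhds x]
      fun y ↦ (fderiv 𝕜 g (f y)).comp (fderiv 𝕜 f y) := by
    filter_upwards [hf.continuousAt.eventually (hg.eventually (by simp)), hf.eventually (by simp)]
      with y hgy hfy
    exact fderiv_comp y (hgy.differentiableAt two_ne_zero) (hfy.differentiableAt two_ne_zero)
  have hg' : HasFDerivAt (fderiv 𝕜 g) (fderiv 𝕜 (fderiv 𝕜 g) (f x)) (f x) :=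
    ((hg.fderiv_right (m := 1) one_add_one_eq_two.le).differentiableAt one_ne_zero).hasFDerivAt
  have hf' : HasFDerivAt (fderiv 𝕜 f) (fderiv 𝕜 (fderiv 𝕜 f) x) x :=
    ((hf.fderiv_right (m := 1) one_add_one_eq_two.le).differentiableAt one_ne_zero).hasFDerivAt
  have hgf' : HasFDerivAt (fun y ↦ fderiv 𝕜 g (f y))
      ((fderiv 𝕜 (fderiv 𝕜 g) (f x)).comp (fderiv 𝕜 f x)) x :=
    hg'.comp x (hf.differentiableAt two_ne_zero).hasFDerivAt
  rw [chain_rule_near.fderiv_eq, (hgf'.clm_comp hf').fderiv]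
  simp [add_comm]

theorem fderiv_fderiv_apply_eq_mul_smul_iteratedDeriv (g : 𝕜 → F) (t a b : 𝕜) :
    fderiv 𝕜 (fderiv 𝕜 g) t a b = (a * b) • iteratedDeriv 2 g t := by
  simpa [iteratedFDeriv_two_apply] using
    iteratedFDeriv_apply_eq_iteratedDeriv_mul_prod (n := 2) (f := g) (x := t) (m := ![a, b])

end SecondDerivative

theorem hasGradientAt_comp {𝕜 E : Type*} [RCLike 𝕜] [NormedAddCommGroup E]
    [InnerProductSpace 𝕜 E] [CompleteSpace E] {g : 𝕜 → 𝕜} {g' : 𝕜} {f : E → 𝕜} {f' x : E}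
    (hg : HasDerivAt g g' (f x)) (hf : HasGradientAt f f' x) :
    HasGradientAt (g ∘ f) (starRingEnd 𝕜 g' • f') x := by
  rw [hasGradientAt_iff_hasFDerivAt, map_smulₛₗ, RCLike.conj_conj]
  exact hg.comp_hasFDerivAt x hf.hasFDerivAt

theorem sum_sq_fderiv_orthonormalBasis {ι E : Type*} [Fintype ι] [NormedAddCommGroup E]
    [InnerProductSpace ℝ E] [CompleteSpace E] (b : OrthonormalBasis ι ℝ E) (f : E → ℝ) (x : E) :
    ∑ i, fderiv ℝ f x (b i) ^ 2 = ‖∇ f x‖ ^ 2 := by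
  simp only [← b.sum_sq_inner_left, inner_gradient_left]

section Laplacian

variable {E F : Type*} [NormedAddCommGroup E] [InnerProductSpace ℝ E] [FiniteDimensional ℝ E]
  [NormedAddCommGroup F] [NormedSpace ℝ F]

theorem laplacian_eq_sum_fderiv_fderiv {ι : Type*} [Fintype ι] (b : OrthonormalBasis ι ℝ E)
    (f : E → F) (x : E) : Δ f x = ∑ i, fderiv ℝ (fderiv ℝ f) x (b i) (b i) := by
  simp [InnerProductSpace.laplacian_eq_iteratedFDeriv_orthonormalBasis f b,
    iteratedFDeriv_two_apply]

theorem flatLaplacian_eq_laplacian (f : E → ℝ) : flatLaplacian f = Δ f :=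
  funext fun x ↦ (laplacian_eq_sum_fderiv_fderiv (stdOrthonormalBasis ℝ E) f x).symm

theorem laplacian_comp {g : ℝ → F} {f : E → ℝ} {x : E}
    (hg : ContDiffAt ℝ 2 g (f x)) (hf : ContDiffAt ℝ 2 f x) :
    Δ (g ∘ f) x = ‖∇ f x‖ ^ 2 • iteratedDeriv 2 g (f x) + Δ f x • deriv g (f x) := by
  let b := stdOrthonormalBasis ℝ E
  have second_deriv (i) : fderiv ℝ (fderiv ℝ (g ∘ f)) x (b i) (b i) =
      fderiv ℝ f x (b i) ^ 2 • iteratedDeriv 2 g (f x) +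
        fderiv ℝ (fderiv ℝ f) x (b i) (b i) • deriv g (f x) := by
    rw [fderiv_fderiv_comp_apply hg hf, fderiv_fderiv_apply_eq_mul_smul_iteratedDeriv, ← pow_two,
      fderiv_eq_smul_deriv]
  rw [laplacian_eq_sum_fderiv_fderiv b (g ∘ f), laplacian_eq_sum_fderiv_fderiv b f,
    ← sum_sq_fderiv_orthonormalBasis b f x]
  simp only [second_deriv, Finset.sum_add_distrib, Finset.sum_smul]

end Laplacian

section ConstSubExpNeg

theorem hasDerivAt_const_sub_exp_neg (c t : ℝ) :
    HasDerivAt (fun s ↦ c - Real.exp (-s)) (Real.exp (-t)) t := by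
  simpa using (hasDerivAt_neg t).exp.const_sub c

theorem iteratedDeriv_two_const_sub_exp_neg (c t : ℝ) :
    iteratedDeriv 2 (fun s ↦ c - Real.exp (-s)) t = -Real.exp (-t) := by
  have deriv_eq : deriv (fun s ↦ c - Real.exp (-s)) = fun s ↦ Real.exp (-s) :=
    funext fun s ↦ (hasDerivAt_const_sub_exp_neg c s).deriv
  rw [iteratedDeriv_succ, iteratedDeriv_one, deriv_eq]
  simpa using (hasDerivAt_neg t).exp.deriv

variable {E : Type*} [NormedAddCommGroup E] [InnerProductSpace ℝ E]

theorem gradient_const_sub_exp_neg [CompleteSpace E] {f : E → ℝ} {x : E}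
    (hf : DifferentiableAt ℝ f x) (c : ℝ) :
    ∇ (fun y ↦ c - Real.exp (-f y)) x = Real.exp (-f x) • ∇ f x :=
  (hasGradientAt_comp (hasDerivAt_const_sub_exp_neg c (f x)) hf.hasGradientAt).gradient

theorem laplacian_const_sub_exp_neg [FiniteDimensional ℝ E] {f : E → ℝ} {x : E}
    (hf : ContDiffAt ℝ 2 f x) (c : ℝ) :
    Δ (fun y ↦ c - Real.exp (-f y)) x = Real.exp (-f x) * (Δ f x - ‖∇ f x‖ ^ 2) := by
  have hφ : ContDiffAt ℝ 2 (fun s ↦ c - Real.exp (-s)) (f x) := by fun_prop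
  calc Δ (fun y ↦ c - Real.exp (-f y)) x
      = ‖∇ f x‖ ^ 2 * -Real.exp (-f x) + Δ f x * Real.exp (-f x) := by
        rw [← iteratedDeriv_two_const_sub_exp_neg c, ← (hasDerivAt_const_sub_exp_neg c (f x)).deriv]
        exact laplacian_comp hφ hf
    _ = Real.exp (-f x) * (Δ f x - ‖∇ f x‖ ^ 2) := by ring

end ConstSubExpNeg

theorem stmt3_general {E : Type*} [NormedAddCommGroup E] [InnerProductSpace ℝ E]
    [FiniteDimensional ℝ E] {f : E → ℝ} {x : E} (hf : ContDiffAt ℝ 2 f x) (r₀ : ℝ)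
    {U R : E → ℝ} (hU : ∀ x, U x = Real.exp (-f x)) (hR : ∀ x, R x = r₀ - Real.exp (-f x))
    (M : E → ℝ) (hRx : R x ≠ 0) :
    (2 / R x + (2 * U x / (R x) ^ 2) *
        (-flatLaplacian f x + (1 + U x / R x) * ‖gradient f x‖ ^ 2) < M x / (R x) ^ 2) ↔
      (-flatLaplacian R x + (R x)⁻¹ * ‖gradient R x‖ ^ 2 + R x < M x / 2) := by
  have laplacian_R : flatLaplacian R x = U x * (flatLaplacian f x - ‖∇ f x‖ ^ 2) := by
    rw [flatLaplacian_eq_laplacian, flatLaplacian_eq_laplacian, funext hR, hU,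
      laplacian_const_sub_exp_neg hf]
  have norm_gradient_R : ‖∇ R x‖ ^ 2 = U x ^ 2 * ‖∇ f x‖ ^ 2 := by
    rw [funext hR, gradient_const_sub_exp_neg (hf.differentiableAt two_ne_zero), ← hU, norm_smul,
      mul_pow, Real.norm_eq_abs, sq_abs]
  have lhs_eq : 2 / R x + (2 * U x / (R x) ^ 2) *
        (-flatLaplacian f x + (1 + U x / R x) * ‖∇ f x‖ ^ 2) =
      2 / R x ^ 2 * (-flatLaplacian R x + (R x)⁻¹ * ‖∇ R x‖ ^ 2 + R x) := by
    rw [laplacian_R, norm_gradient_R]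
    field_simp
    ring
  have rhs_eq : M x / R x ^ 2 = 2 / R x ^ 2 * (M x / 2) := by ring
  rw [lhs_eq, rhs_eq, mul_lt_mul_iff_right₀ (by positivity)]

theorem stmt3 {E : Type*} [NormedAddCommGroup E] [InnerProductSpace ℝ E]
    [FiniteDimensional ℝ E] (f : E → ℝ) (hf : ContDiff ℝ 2 f)
    (r₀ : ℝ) (hr₀ : 0 < r₀)
    (U R : E → ℝ) (hU : ∀ x, U x = Real.exp (-f x))
    (hR : ∀ x, R x = r₀ - Real.exp (-f x))
    (M : E → ℝ) (x : E) (hRx : 0 < R x) :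
    (2 / R x + (2 * U x / (R x) ^ 2) *
        (-flatLaplacian f x + (1 + U x / R x) * ‖gradient f x‖ ^ 2) < M x / (R x) ^ 2) ↔
      (-flatLaplacian R x + (R x)⁻¹ * ‖gradient R x‖ ^ 2 + R x < M x / 2) :=
  stmt3_general hf.contDiffAt r₀ hU hR M hRx.ne'
end

section
/- Let φ : ℝ² → ℝ be a smooth (infinitely differentiable) function with compact support on the Euclidean plane, and let p ∈ ℝ². Then the function x ↦ log‖x − p‖ · Δφ(x) is integrable with respect to Lebesgue measure and ∫_{ℝ²} log‖x − p‖ · Δφ(x) dx = 2π·φ(p). -/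
open MeasureTheory

/-!
The kernel `log ‖x‖` is the limit as `ε → 0` of the smooth functions `log (‖x‖ ^ 2 + ε ^ 2) / 2`.
In the plane the Laplacian of the latter is `2 * ε ^ 2 / (‖x‖ ^ 2 + ε ^ 2) ^ 2`, which is `2 * π`
times the rescaling by `ε` of a fixed probability density and hence an approximation of
`2 * π * δ₀`. Green's identity moves the Laplacian from the test function to the smooth kernel, and
dominated convergence handles the other side since `log ‖x‖` is locally integrable.
-/

open Filter Topology Set Module

section SecondDerivative

variable {E F : Type*} [NormedAddCommGroup E] [NormedSpace ℝ E]
  [NormedAddCommGroup F] [NormedSpace ℝ F] {f : E → F}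

lemma fderiv_fderiv_apply_const (hf : ContDiff ℝ 2 f) (x v w : E) :
    fderiv ℝ (fun y => fderiv ℝ f y w) x v = fderiv ℝ (fderiv ℝ f) x v w := by
  have hf' : DifferentiableAt ℝ (fderiv ℝ f) x :=
    (hf.fderiv_right (m := 1) le_rfl).differentiable one_ne_zero x
  simp [fderiv_clm_apply hf' (differentiableAt_const w)]

lemma contDiff_fderiv_apply_const (hf : ContDiff ℝ 2 f) (w : E) :
    ContDiff ℝ 1 fun x => fderiv ℝ f x w :=
  (hf.fderiv_right (m := 1) le_rfl).clm_apply contDiff_const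

lemma continuous_fderiv_fderiv_apply (hf : ContDiff ℝ 2 f) (v w : E) :
    Continuous fun x => fderiv ℝ (fderiv ℝ f) x v w := by
  have hf' : Continuous (fderiv ℝ (fderiv ℝ f)) :=
    (hf.fderiv_right (m := 1) le_rfl).continuous_fderiv one_ne_zero
  exact (hf'.clm_apply continuous_const).clm_apply continuous_const

lemma hasCompactSupport_fderiv_fderiv_apply (hf : HasCompactSupport f) (v w : E) :
    HasCompactSupport fun x => fderiv ℝ (fderiv ℝ f) x v w :=
  ((hf.fderiv ℝ).fderiv_apply ℝ v).comp_left (g := fun L : E →L[ℝ] F => L w) rfl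

end SecondDerivative

section Laplacian

variable {E : Type*} [NormedAddCommGroup E] [InnerProductSpace ℝ E] [FiniteDimensional ℝ E]
  {f : E → ℝ}

lemma flatLaplacian_comp_add_right (f : E → ℝ) (a x : E) :
    flatLaplacian (fun y => f (y + a)) x = flatLaplacian f (x + a) := by
  have h : fderiv ℝ (fun y => f (y + a)) = fun y => fderiv ℝ f (y + a) :=
    funext fun _ => fderiv_comp_add_right a
  simp only [flatLaplacian, h, fderiv_comp_add_right]

lemma continuous_flatLaplacian (hf : ContDiff ℝ 2 f) : Continuous (flatLaplacian f) :=
  continuous_finsetSum _ fun _ _ => continuous_fderiv_fderiv_apply hf _ _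

lemma hasCompactSupport_flatLaplacian (hf : HasCompactSupport f) :
    HasCompactSupport (flatLaplacian f) :=
  ((hf.fderiv ℝ).fderiv ℝ).comp_left
    (g := fun B : E →L[ℝ] E →L[ℝ] ℝ =>
      ∑ i, B (stdOrthonormalBasis ℝ E i) (stdOrthonormalBasis ℝ E i)) (by simp)

end Laplacian

section Green

variable {E : Type*} [NormedAddCommGroup E] [MeasurableSpace E] [BorelSpace E]

section NormedSpace

variable [NormedSpace ℝ E] [FiniteDimensional ℝ E] {μ : Measure E} [μ.IsAddHaarMeasure]
  {f g : E → ℝ}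

lemma integral_mul_fderiv_eq_neg_fderiv_mul_of_hasCompactSupport (hf : ContDiff ℝ 1 f)
    (hg : ContDiff ℝ 1 g) (hgs : HasCompactSupport g) (v : E) :
    ∫ x, f x * fderiv ℝ g x v ∂μ = -∫ x, fderiv ℝ f x v * g x ∂μ := by
  have hf' : Continuous fun x => fderiv ℝ f x v :=
    (hf.continuous_fderiv one_ne_zero).clm_apply continuous_const
  have hg' : Continuous fun x => fderiv ℝ g x v :=
    (hg.continuous_fderiv one_ne_zero).clm_apply continuous_const
  exact integral_mul_fderiv_eq_neg_fderiv_mul_of_integrable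
    ((hf'.mul hg.continuous).integrable_of_hasCompactSupport hgs.mul_left)
    ((hf.continuous.mul hg').integrable_of_hasCompactSupport (hgs.fderiv_apply ℝ v).mul_left)
    ((hf.continuous.mul hg.continuous).integrable_of_hasCompactSupport hgs.mul_left)
    (fun x _ => hf.differentiable one_ne_zero x) (fun x _ => hg.differentiable one_ne_zero x)

lemma integral_mul_fderiv_fderiv_eq_fderiv_fderiv_mul (hf : ContDiff ℝ 2 f)
    (hg : ContDiff ℝ 2 g) (hgs : HasCompactSupport g) (v w : E) :
    ∫ x, f x * fderiv ℝ (fderiv ℝ g) x v w ∂μ = ∫ x, fderiv ℝ (fderiv ℝ f) x w v * g x ∂μ := by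
  have hf₁ : ContDiff ℝ 1 f := hf.of_le one_le_two
  have hg₁ : ContDiff ℝ 1 g := hg.of_le one_le_two
  calc ∫ x, f x * fderiv ℝ (fderiv ℝ g) x v w ∂μ
      = -∫ x, fderiv ℝ f x v * fderiv ℝ g x w ∂μ := by
        simpa only [fderiv_fderiv_apply_const hg] using
          integral_mul_fderiv_eq_neg_fderiv_mul_of_hasCompactSupport (μ := μ) hf₁
            (contDiff_fderiv_apply_const hg w) (hgs.fderiv_apply ℝ w) v
    _ = ∫ x, fderiv ℝ (fderiv ℝ f) x w v * g x ∂μ := by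
        rw [integral_mul_fderiv_eq_neg_fderiv_mul_of_hasCompactSupport
          (contDiff_fderiv_apply_const hf v) hg₁ hgs w, neg_neg]
        simp only [fderiv_fderiv_apply_const hf]

end NormedSpace

variable [InnerProductSpace ℝ E] [FiniteDimensional ℝ E] {μ : Measure E} [μ.IsAddHaarMeasure]
  {f g : E → ℝ}

theorem integral_mul_flatLaplacian_eq_flatLaplacian_mul (hf : ContDiff ℝ 2 f)
    (hg : ContDiff ℝ 2 g) (hgs : HasCompactSupport g) :
    ∫ x, f x * flatLaplacian g x ∂μ = ∫ x, flatLaplacian f x * g x ∂μ := by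
  have h_right (v : E) : Integrable (fun x => f x * fderiv ℝ (fderiv ℝ g) x v v) μ :=
    (hf.continuous.mul (continuous_fderiv_fderiv_apply hg v v)).integrable_of_hasCompactSupport
      (hasCompactSupport_fderiv_fderiv_apply hgs v v).mul_left
  have h_left (v : E) : Integrable (fun x => fderiv ℝ (fderiv ℝ f) x v v * g x) μ :=
    ((continuous_fderiv_fderiv_apply hf v v).mul hg.continuous).integrable_of_hasCompactSupport
      hgs.mul_left
  simp only [flatLaplacian, Finset.mul_sum, Finset.sum_mul]
  rw [integral_finsetSum _ fun i _ => h_right _, integral_finsetSum _ fun i _ => h_left _]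
  exact Finset.sum_congr rfl fun i _ =>
    integral_mul_fderiv_fderiv_eq_fderiv_fderiv_mul hf hg hgs _ _

end Green

section LogNorm

lemma locallyIntegrable_log_norm {E : Type*} [NormedAddCommGroup E] [NormedSpace ℝ E]
    [FiniteDimensional ℝ E] [Nontrivial E] [MeasurableSpace E] [BorelSpace E]
    (μ : Measure E) [μ.IsAddHaarMeasure] : LocallyIntegrable (fun x : E => Real.log ‖x‖) μ := by
  have h_ball (R : ℝ) : IntegrableOn (fun x : E => Real.log ‖x‖) (Metric.ball 0 R) μ := by
    rw [integrableOn_fun_norm_addHaar]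
    have h_log : IntegrableOn Real.log (Icc 0 R) :=
      (integrableOn_Icc_iff_integrableOn_Ioc (by simp)).2
        intervalIntegral.intervalIntegrable_log'.1
    exact (h_log.continuousOn_mul (by fun_prop) isCompact_Icc).mono_set Ioo_subset_Icc_self
  exact fun x => ⟨Metric.ball 0 (‖x‖ + 1), Metric.isOpen_ball.mem_nhds (by simp), h_ball _⟩

/-- A regularization of `x ↦ log ‖x‖`: the logarithm of `√(‖x‖ ^ 2 + ε ^ 2)`, written without the
square root. It is smooth on inner product spaces for `ε ≠ 0`. -/
noncomputable def regLogNorm {E : Type*} [NormedAddCommGroup E] (ε : ℝ) (x : E) : ℝ :=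
  Real.log (‖x‖ ^ 2 + ε ^ 2) / 2

section NormedGroup

variable {E : Type*} [NormedAddCommGroup E] {ε : ℝ} {x : E}

lemma regLogNorm_zero (x : E) : regLogNorm 0 x = Real.log ‖x‖ := by
  simp [regLogNorm, Real.log_pow]

lemma continuous_regLogNorm (hε : ε ≠ 0) : Continuous (regLogNorm ε : E → ℝ) := by
  have h (x : E) : ‖x‖ ^ 2 + ε ^ 2 ≠ 0 := by positivity
  unfold regLogNorm
  fun_prop (disch := exact h)

lemma tendsto_regLogNorm (hx : x ≠ 0) :
    Tendsto (fun ε => regLogNorm ε x) (𝓝 0) (𝓝 (Real.log ‖x‖)) := by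
  have h : ContinuousAt (fun ε => regLogNorm ε x) 0 := by
    have h₀ : ‖x‖ ^ 2 + (0 : ℝ) ^ 2 ≠ 0 := by positivity
    unfold regLogNorm
    fun_prop (disch := exact h₀)
  simpa only [ContinuousAt, regLogNorm_zero] using h

lemma log_norm_le_regLogNorm (hx : x ≠ 0) (ε : ℝ) : Real.log ‖x‖ ≤ regLogNorm ε x := by
  rw [← regLogNorm_zero]
  unfold regLogNorm
  gcongr Real.log (_ + ?_) / 2
  simpa only [zero_pow two_ne_zero] using sq_nonneg ε

lemma regLogNorm_le_norm_sq (hx : x ≠ 0) (hε : |ε| ≤ 1) : regLogNorm ε x ≤ ‖x‖ ^ 2 := by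
  have hε₂ : ε ^ 2 ≤ 1 := (sq_le_one_iff_abs_le_one ε).2 hε
  have h_log : Real.log (‖x‖ ^ 2 + ε ^ 2) ≤ ‖x‖ ^ 2 + ε ^ 2 - 1 :=
    Real.log_le_sub_one_of_pos (by positivity)
  unfold regLogNorm
  linarith [sq_nonneg ‖x‖]

theorem tendsto_integral_regLogNorm_mul [MeasurableSpace E] [OpensMeasurableSpace E]
    {μ : Measure E} [NullSingletonClass μ] {g : E → ℝ} (hg : AEStronglyMeasurable g μ)
    (hlog : Integrable (fun x => Real.log ‖x‖ * g x) μ)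
    (hsq : Integrable (fun x => ‖x‖ ^ 2 * g x) μ) :
    Tendsto (fun ε => ∫ x, regLogNorm ε x * g x ∂μ) (𝓝[≠] 0)
      (𝓝 (∫ x, Real.log ‖x‖ * g x ∂μ)) := by
  have h_ne : ∀ᵐ x ∂μ, x ≠ 0 := compl_mem_ae_iff.2 (measure_singleton 0)
  refine tendsto_integral_filter_of_dominated_convergence
    (fun x => ‖Real.log ‖x‖ * g x‖ + ‖‖x‖ ^ 2 * g x‖) ?_ ?_ (hlog.norm.add hsq.norm) ?_
  · filter_upwards [self_mem_nhdsWithin] with ε hε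
    exact (continuous_regLogNorm hε).aestronglyMeasurable.mul hg
  · have h_small : ∀ᶠ ε : ℝ in 𝓝[≠] 0, |ε| ≤ 1 :=
      nhdsWithin_le_nhds (continuous_abs.continuousAt.eventually_le_const (by simp))
    filter_upwards [h_small] with ε hε
    filter_upwards [h_ne] with x hx
    have h_abs : ‖regLogNorm ε x‖ ≤ ‖Real.log ‖x‖‖ + ‖‖x‖ ^ 2‖ :=
      (abs_le_max_abs_abs (log_norm_le_regLogNorm hx ε) (regLogNorm_le_norm_sq hx hε)).trans
        (max_le_add_of_nonneg (abs_nonneg _) (abs_nonneg _))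
    rw [norm_mul, norm_mul, norm_mul, ← add_mul]
    gcongr
  · filter_upwards [h_ne] with x hx
    exact ((tendsto_regLogNorm hx).mono_left nhdsWithin_le_nhds).mul_const _

end NormedGroup

section InnerProductSpace

variable {E : Type*} [NormedAddCommGroup E] [InnerProductSpace ℝ E] {ε : ℝ}

lemma contDiff_regLogNorm {n : WithTop ℕ∞} (hε : ε ≠ 0) :
    ContDiff ℝ n (regLogNorm ε : E → ℝ) :=
  (((contDiff_norm_sq ℝ).add contDiff_const).log fun x => by positivity).div_const 2

lemma fderiv_regLogNorm (hε : ε ≠ 0) :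
    fderiv ℝ (regLogNorm ε : E → ℝ) = fun x => (‖x‖ ^ 2 + ε ^ 2)⁻¹ • innerSL ℝ x := by
  ext x v
  have h_sq : HasFDerivAt (fun y : E => ‖y‖ ^ 2 + ε ^ 2) (2 • innerSL ℝ x) x :=
    (hasStrictFDerivAt_norm_sq x).hasFDerivAt.add_const _
  have h : HasFDerivAt (regLogNorm ε : E → ℝ)
      ((2 : ℝ)⁻¹ • (‖x‖ ^ 2 + ε ^ 2)⁻¹ • 2 • innerSL ℝ x) x := by
    have h_log := (h_sq.log (by positivity)).const_mul (2 : ℝ)⁻¹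
    exact h_log.congr_of_eventuallyEq (.of_forall fun y => div_eq_inv_mul _ _)
  rw [h.fderiv]
  simp only [smul_apply, coe_innerSL_apply, nsmul_eq_mul, Nat.cast_ofNat, smul_eq_mul]
  ring

lemma fderiv_fderiv_regLogNorm_apply (hε : ε ≠ 0) (x v w : E) :
    fderiv ℝ (fderiv ℝ (regLogNorm ε)) x v w
      = inner ℝ v w / (‖x‖ ^ 2 + ε ^ 2)
        - 2 * (inner ℝ x v * inner ℝ x w) / (‖x‖ ^ 2 + ε ^ 2) ^ 2 := by
  have hs : ‖x‖ ^ 2 + ε ^ 2 ≠ 0 := by positivity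
  have h_inv : HasFDerivAt (fun y : E => (‖y‖ ^ 2 + ε ^ 2)⁻¹)
      (-((‖x‖ ^ 2 + ε ^ 2) ^ 2)⁻¹ • 2 • innerSL ℝ x) x :=
    (hasDerivAt_inv hs).comp_hasFDerivAt x
      ((hasStrictFDerivAt_norm_sq x).hasFDerivAt.add_const _)
  have h_inner (y z : E) : (innerSL ℝ : E →L[ℝ] E →L[ℝ] ℝ) y z = inner ℝ y z := rfl
  rw [fderiv_regLogNorm hε, (h_inv.fun_smul (innerSL ℝ : E →L[ℝ] E →L[ℝ] ℝ).hasFDerivAt).fderiv]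
  simp only [neg_smul, add_apply, smul_apply, ContinuousLinearMap.smulRight_apply, neg_apply,
    h_inner, nsmul_eq_mul, Nat.cast_ofNat, smul_eq_mul]
  ring

variable [FiniteDimensional ℝ E]

lemma flatLaplacian_regLogNorm (hε : ε ≠ 0) (x : E) :
    flatLaplacian (regLogNorm ε) x
      = finrank ℝ E / (‖x‖ ^ 2 + ε ^ 2) - 2 * ‖x‖ ^ 2 / (‖x‖ ^ 2 + ε ^ 2) ^ 2 := by
  simp only [flatLaplacian, fderiv_fderiv_regLogNorm_apply hε, Finset.sum_sub_distrib,
    ← Finset.sum_div, ← Finset.mul_sum, ← sq, OrthonormalBasis.sum_sq_inner_left,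
    OrthonormalBasis.inner_eq_one, Finset.sum_const, Finset.card_univ, Fintype.card_fin,
    nsmul_eq_mul, mul_one]

end InnerProductSpace

end LogNorm

section SphericalDensity

/-- The density, in stereographic coordinates on a plane, of the area of the unit sphere normalized
to total mass one. Its rescalings form the approximate identity of the argument. -/
noncomputable def sphericalDensity {E : Type*} [NormedAddCommGroup E] (x : E) : ℝ :=
  (Real.pi * (1 + ‖x‖ ^ 2) ^ 2)⁻¹

lemma sphericalDensity_nonneg {E : Type*} [NormedAddCommGroup E] (x : E) :
    0 ≤ sphericalDensity x := by
  unfold sphericalDensity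
  positivity

lemma tendsto_norm_sq_mul_sphericalDensity_cobounded {E : Type*} [NormedAddCommGroup E] :
    Tendsto (fun x : E => ‖x‖ ^ 2 * sphericalDensity x) (Bornology.cobounded E) (𝓝 0) := by
  have h_atTop : Tendsto (fun x : E => Real.pi * (1 + ‖x‖ ^ 2)) (Bornology.cobounded E) atTop :=
    (tendsto_atTop_add_const_left _ _
      ((tendsto_pow_atTop two_ne_zero).comp tendsto_norm_cobounded_atTop)).const_mul_atTop
        Real.pi_pos
  refine squeeze_zero (fun x => mul_nonneg (by positivity) (sphericalDensity_nonneg x))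
    (fun x => ?_) h_atTop.inv_tendsto_atTop
  calc ‖x‖ ^ 2 * sphericalDensity x
      ≤ (1 + ‖x‖ ^ 2) * sphericalDensity x := by
        gcongr
        · exact sphericalDensity_nonneg x
        · simp
    _ = (Real.pi * (1 + ‖x‖ ^ 2))⁻¹ := by
        unfold sphericalDensity
        field_simp

lemma integral_Ioi_mul_inv_one_add_sq_sq :
    ∫ r in Ioi (0 : ℝ), r * ((1 + r ^ 2) ^ 2)⁻¹ = 1 / 2 := by
  have h_deriv (r : ℝ) :
      HasDerivAt (fun r : ℝ => -(1 + r ^ 2)⁻¹ / 2) (r * ((1 + r ^ 2) ^ 2)⁻¹) r := by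
    have h := (((hasDerivAt_pow 2 r).const_add 1).inv (by positivity)).neg.div_const 2
    refine h.congr_deriv ?_
    field_simp
    simp [mul_comm]
  have h_lim : Tendsto (fun r : ℝ => -(1 + r ^ 2)⁻¹ / 2) atTop (𝓝 0) := by
    have h : Tendsto (fun r : ℝ => 1 + r ^ 2) atTop atTop :=
      tendsto_atTop_add_const_left _ _ (tendsto_pow_atTop two_ne_zero)
    simpa using h.inv_tendsto_atTop.neg.div_const 2
  rw [integral_Ioi_of_hasDerivAt_of_nonneg' (fun r _ => h_deriv r)
    (fun r (hr : 0 < r) => by positivity) h_lim]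
  norm_num

variable {E : Type*} [NormedAddCommGroup E] [InnerProductSpace ℝ E] [FiniteDimensional ℝ E]

lemma flatLaplacian_regLogNorm_of_finrank_eq_two (hE : finrank ℝ E = 2) {ε : ℝ} (hε : ε ≠ 0)
    (x : E) :
    flatLaplacian (regLogNorm ε) x
      = 2 * Real.pi * (ε⁻¹ ^ finrank ℝ E * sphericalDensity (ε⁻¹ • x)) := by
  have hs : ‖x‖ ^ 2 + ε ^ 2 ≠ 0 := by positivity
  have h_norm : ‖ε⁻¹ • x‖ ^ 2 = ‖x‖ ^ 2 / ε ^ 2 := by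
    rw [norm_smul, mul_pow, Real.norm_eq_abs, sq_abs, inv_pow, inv_mul_eq_div]
  rw [flatLaplacian_regLogNorm hε, sphericalDensity, h_norm, hE]
  field_simp
  ring

variable [MeasurableSpace E] [BorelSpace E]

lemma integral_sphericalDensity (hE : finrank ℝ E = 2) : ∫ x : E, sphericalDensity x = 1 := by
  have : Nontrivial E := nontrivial_of_finrank_pos (R := ℝ) (hE ▸ two_pos)
  have h_ball : (volume : Measure E).real (Metric.ball 0 1) = Real.pi := by
    simp [Measure.real, InnerProductSpace.volume_ball_of_dim_even (k := 1) hE, Real.pi_nonneg]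
  have h_radial : ∫ r in Ioi (0 : ℝ), r ^ (finrank ℝ E - 1) • (Real.pi * (1 + r ^ 2) ^ 2)⁻¹
      = (2 * Real.pi)⁻¹ := by
    simp only [hE, Nat.add_one_sub_one, pow_one, smul_eq_mul, mul_inv, mul_left_comm _ Real.pi⁻¹]
    rw [integral_const_mul, integral_Ioi_mul_inv_one_add_sq_sq]
    ring
  unfold sphericalDensity
  rw [integral_fun_norm_addHaar volume fun r => (Real.pi * (1 + r ^ 2) ^ 2)⁻¹, h_radial, h_ball, hE]
  simp [Real.pi_ne_zero]

theorem tendsto_integral_flatLaplacian_regLogNorm_mul (hE : finrank ℝ E = 2) {g : E → ℝ}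
    (hg : Integrable g) (hg₀ : ContinuousAt g 0) :
    Tendsto (fun ε => ∫ x, flatLaplacian (regLogNorm ε) x * g x) (𝓝[>] 0)
      (𝓝 (2 * Real.pi * g 0)) := by
  have h_decay : Tendsto (fun x : E => ‖x‖ ^ finrank ℝ E * sphericalDensity x)
      (Bornology.cobounded E) (𝓝 0) := by
    simpa only [hE] using tendsto_norm_sq_mul_sphericalDensity_cobounded
  have h_peak := (tendsto_integral_comp_smul_smul_of_integrable sphericalDensity_nonneg
    (integral_sphericalDensity hE) h_decay hg hg₀).comp tendsto_inv_nhdsGT_zero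
  refine (h_peak.const_mul (2 * Real.pi)).congr' ?_
  filter_upwards [self_mem_nhdsWithin] with ε (hε : 0 < ε)
  simp only [Function.comp_apply, flatLaplacian_regLogNorm_of_finrank_eq_two hE hε.ne',
    ← integral_const_mul, smul_eq_mul, mul_assoc]

end SphericalDensity

section FundamentalSolution

variable {E : Type*} [NormedAddCommGroup E] [InnerProductSpace ℝ E] [FiniteDimensional ℝ E]
  [MeasurableSpace E] [BorelSpace E] {φ : E → ℝ}

lemma integrable_log_norm_mul_flatLaplacian [Nontrivial E] (μ : Measure E) [μ.IsAddHaarMeasure]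
    (hφ : ContDiff ℝ 2 φ) (hsupp : HasCompactSupport φ) :
    Integrable (fun x => Real.log ‖x‖ * flatLaplacian φ x) μ :=
  (locallyIntegrable_log_norm μ).integrable_smul_right_of_hasCompactSupport
    (continuous_flatLaplacian hφ) (hasCompactSupport_flatLaplacian hsupp)

theorem integral_log_norm_mul_flatLaplacian (hE : finrank ℝ E = 2) (hφ : ContDiff ℝ 2 φ)
    (hsupp : HasCompactSupport φ) :
    ∫ x, Real.log ‖x‖ * flatLaplacian φ x = 2 * Real.pi * φ 0 := by
  have : Nontrivial E := nontrivial_of_finrank_pos (R := ℝ) (hE ▸ two_pos)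
  have hΔ : Continuous (flatLaplacian φ) := continuous_flatLaplacian hφ
  have h_sq : Integrable fun x : E => ‖x‖ ^ 2 * flatLaplacian φ x :=
    Continuous.integrable_of_hasCompactSupport (by fun_prop)
      (hasCompactSupport_flatLaplacian hsupp).mul_left
  have h_left : Tendsto (fun ε => ∫ x, regLogNorm ε x * flatLaplacian φ x) (𝓝[>] 0)
      (𝓝 (∫ x, Real.log ‖x‖ * flatLaplacian φ x)) :=
    (tendsto_integral_regLogNorm_mul hΔ.aestronglyMeasurable
      (integrable_log_norm_mul_flatLaplacian volume hφ hsupp) h_sq).mono_left (nhdsGT_le_nhdsNE 0)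
  have h_right : Tendsto (fun ε => ∫ x, flatLaplacian (regLogNorm ε) x * φ x) (𝓝[>] 0)
      (𝓝 (2 * Real.pi * φ 0)) :=
    tendsto_integral_flatLaplacian_regLogNorm_mul hE
      (hφ.continuous.integrable_of_hasCompactSupport hsupp) hφ.continuous.continuousAt
  refine tendsto_nhds_unique (h_left.congr' ?_) h_right
  filter_upwards [self_mem_nhdsWithin] with ε (hε : 0 < ε)
  exact integral_mul_flatLaplacian_eq_flatLaplacian_mul (contDiff_regLogNorm hε.ne') hφ hsupp

theorem stmt6_general (hE : finrank ℝ E = 2) (hφ : ContDiff ℝ 2 φ) (hsupp : HasCompactSupport φ)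
    (p : E) :
    Integrable (fun x => Real.log ‖x - p‖ * flatLaplacian φ x) ∧
    ∫ x, Real.log ‖x - p‖ * flatLaplacian φ x = 2 * Real.pi * φ p := by
  have : Nontrivial E := nontrivial_of_finrank_pos (R := ℝ) (hE ▸ two_pos)
  let ψ : E → ℝ := fun x => φ (x + p)
  have hψ : ContDiff ℝ 2 ψ := hφ.comp (contDiff_id.add contDiff_const)
  have hψ_supp : HasCompactSupport ψ := hsupp.comp_homeomorph (Homeomorph.addRight p)
  have h_translate (x : E) : flatLaplacian φ x = flatLaplacian ψ (x - p) := by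
    rw [flatLaplacian_comp_add_right, sub_add_cancel]
  simp only [h_translate]
  refine ⟨(integrable_log_norm_mul_flatLaplacian volume hψ hψ_supp).comp_sub_right p, ?_⟩
  calc ∫ x, Real.log ‖x - p‖ * flatLaplacian ψ (x - p)
      = ∫ x, Real.log ‖x‖ * flatLaplacian ψ x :=
        integral_sub_right_eq_self (fun x => Real.log ‖x‖ * flatLaplacian ψ x) p
    _ = 2 * Real.pi * ψ 0 := integral_log_norm_mul_flatLaplacian hE hψ hψ_supp
    _ = 2 * Real.pi * φ p := by simp only [ψ, zero_add]

end FundamentalSolution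

theorem stmt6 (φ : EuclideanSpace ℝ (Fin 2) → ℝ) (hφ : ContDiff ℝ (⊤ : ℕ∞) φ)
    (hsupp : HasCompactSupport φ) (p : EuclideanSpace ℝ (Fin 2)) :
    Integrable (fun x : EuclideanSpace ℝ (Fin 2) => Real.log ‖x - p‖ * flatLaplacian φ x) ∧
    ∫ x : EuclideanSpace ℝ (Fin 2), Real.log ‖x - p‖ * flatLaplacian φ x
      = 2 * Real.pi * φ p :=
  stmt6_general finrank_euclideanSpace_fin (contDiff_infty.1 hφ 2) hsupp p
end

section
/- Let r₀ > 0, 0 < u_* < r₀, δ > 0, δ₀ ≥ 0, H ≥ 0. Let r, h, k : [0, u_*] → ℝ with r and h differentiable, and suppose that for all u ∈ [0, u_*]: (i) 0 < r(u) ≤ r₀ and |r'(u) + 1| ≤ δ₀·r(u); (ii) 0 ≤ h(u) ≤ H·δ⁻¹; (iii) |k(u) + 2/r(u)| ≤ δ₀; and (iv) |h'(u) + k(u)·h(u)| ≤ δ₀·δ⁻¹. Then for every u ∈ [0, u_*], |r(u)²·h(u) − r(0)²·h(0)| ≤ (3H + 1)·r₀²·δ₀·δ⁻¹·u. -/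
/-!
If `w' = k w`, then `w` is an integrating factor for `h' + k h`, that is, `(w h)' = w (h' + k h)`.
When `w' = k w` only up to an error, `(w h)' = w (h' + k h) + (w' - k w) h`, and both terms are
small. For `w = r ^ n` the error is `n r ^ (n - 1) (r' - c) - r ^ n (k - n c / r)`, so `r ^ n` is an
approximate integrating factor as soon as `r' ≈ c` and `k ≈ n c / r`. The incoming direction along
two-dimensional spheres is `c = -1`, `n = 2`.
-/

open Set

section IntegratingFactor

variable {E : Type*} [NormedAddCommGroup E] [NormedSpace ℝ E]

theorem norm_smul_sub_smul_le_of_approx_integratingFactor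
    {a b W B M F : ℝ} {w w' k : ℝ → ℝ} {h h' : ℝ → E}
    (hw : ∀ u ∈ Icc a b, HasDerivWithinAt w (w' u) (Icc a b) u)
    (hh : ∀ u ∈ Icc a b, HasDerivWithinAt h (h' u) (Icc a b) u)
    (hwW : ∀ u ∈ Ico a b, |w u| ≤ W)
    (hwB : ∀ u ∈ Ico a b, |w' u - k u * w u| ≤ B)
    (hhM : ∀ u ∈ Ico a b, ‖h u‖ ≤ M)
    (hhF : ∀ u ∈ Ico a b, ‖h' u + k u • h u‖ ≤ F) :
    ∀ u ∈ Icc a b, ‖w u • h u - w a • h a‖ ≤ (W * F + B * M) * (u - a) := by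
  refine norm_image_sub_le_of_norm_deriv_le_segment'
    (fun u hu => (hw u hu).smul (hh u hu)) fun u hu => ?_
  have deriv_eq : w u • h' u + w' u • h u =
      w u • (h' u + k u • h u) + (w' u - k u * w u) • h u := by module
  have W_nonneg : 0 ≤ W := (abs_nonneg _).trans (hwW u hu)
  have B_nonneg : 0 ≤ B := (abs_nonneg _).trans (hwB u hu)
  calc ‖w u • h' u + w' u • h u‖
      ≤ ‖w u • (h' u + k u • h u)‖ + ‖(w' u - k u * w u) • h u‖ := by
        rw [deriv_eq]
        exact norm_add_le _ _
    _ = |w u| * ‖h' u + k u • h u‖ + |w' u - k u * w u| * ‖h u‖ := by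
        simp only [norm_smul, Real.norm_eq_abs]
    _ ≤ W * F + B * M :=
        add_le_add (mul_le_mul (hwW u hu) (hhF u hu) (norm_nonneg _) W_nonneg)
          (mul_le_mul (hwB u hu) (hhM u hu) (norm_nonneg _) B_nonneg)

theorem abs_natCast_mul_pow_mul_sub_mul_pow_le {r r' k c α β : ℝ} (n : ℕ) (hr : 0 < r)
    (hr' : |r' - c| ≤ α * r) (hk : |k - n * c / r| ≤ β) :
    |n * r ^ (n - 1) * r' - k * r ^ n| ≤ (n * α + β) * r ^ n := by
  have pow_pred_mul : n * r ^ (n - 1) * r = n * r ^ n := by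
    cases n with
    | zero => simp
    | succ m => rw [Nat.add_sub_cancel, mul_assoc, ← pow_succ]
  have error_eq : n * r ^ (n - 1) * r' - k * r ^ n =
      n * r ^ (n - 1) * (r' - c) - r ^ n * (k - n * c / r) := by
    field_simp
    linear_combination c * pow_pred_mul
  calc |n * r ^ (n - 1) * r' - k * r ^ n|
      ≤ |n * r ^ (n - 1) * (r' - c)| + |r ^ n * (k - n * c / r)| := by
        rw [error_eq]
        exact abs_sub _ _
    _ = n * r ^ (n - 1) * |r' - c| + r ^ n * |k - n * c / r| := by
        rw [abs_mul, abs_mul (r ^ n), abs_of_nonneg (by positivity : 0 ≤ n * r ^ (n - 1)),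
          abs_of_nonneg (by positivity : 0 ≤ r ^ n)]
    _ ≤ n * r ^ (n - 1) * (α * r) + r ^ n * β := by gcongr
    _ = (n * α + β) * r ^ n := by linear_combination α * pow_pred_mul

theorem stmt10_general {a b R c α β M F : ℝ} (n : ℕ) {r r' k : ℝ → ℝ} {h h' : ℝ → E}
    (hr : ∀ u ∈ Icc a b, HasDerivWithinAt r (r' u) (Icc a b) u)
    (hh : ∀ u ∈ Icc a b, HasDerivWithinAt h (h' u) (Icc a b) u)
    (hr_bounds : ∀ u ∈ Icc a b, 0 < r u ∧ r u ≤ R ∧ |r' u - c| ≤ α * r u)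
    (hhM : ∀ u ∈ Icc a b, ‖h u‖ ≤ M)
    (hk : ∀ u ∈ Icc a b, |k u - n * c / r u| ≤ β)
    (hhF : ∀ u ∈ Icc a b, ‖h' u + k u • h u‖ ≤ F) :
    ∀ u ∈ Icc a b,
      ‖r u ^ n • h u - r a ^ n • h a‖ ≤ R ^ n * ((n * α + β) * M + F) * (u - a) := by
  have pow_le : ∀ u ∈ Icc a b, |r u ^ n| ≤ R ^ n := fun u hu => by
    obtain ⟨r_pos, r_le, -⟩ := hr_bounds u hu
    rw [abs_of_pos (pow_pos r_pos n)]
    gcongr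
  have error_le : ∀ u ∈ Icc a b,
      |n * r u ^ (n - 1) * r' u - k u * r u ^ n| ≤ (n * α + β) * R ^ n := fun u hu => by
    obtain ⟨r_pos, r_le, deriv_near⟩ := hr_bounds u hu
    have α_nonneg : 0 ≤ α := nonneg_of_mul_nonneg_left ((abs_nonneg _).trans deriv_near) r_pos
    have β_nonneg : 0 ≤ β := (abs_nonneg _).trans (hk u hu)
    refine (abs_natCast_mul_pow_mul_sub_mul_pow_le n r_pos deriv_near (hk u hu)).trans ?_
    gcongr
  have Ico_sub : Ico a b ⊆ Icc a b := Ico_subset_Icc_self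
  intro u hu
  refine (norm_smul_sub_smul_le_of_approx_integratingFactor (fun v hv => (hr v hv).fun_pow n) hh
    (fun v hv => pow_le v (Ico_sub hv)) (fun v hv => error_le v (Ico_sub hv))
    (fun v hv => hhM v (Ico_sub hv)) (fun v hv => hhF v (Ico_sub hv)) u hu).trans_eq ?_
  ring

end IntegratingFactor

theorem stmt10 (r₀ uStar δ δ₀ H : ℝ) (hr₀ : 0 < r₀) (huStar : 0 < uStar) (huStar' : uStar < r₀)
    (hδ : 0 < δ) (hδ₀ : 0 ≤ δ₀) (hH : 0 ≤ H)
    (r h k r' h' : ℝ → ℝ)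
    (hrderiv : ∀ u ∈ Set.Icc (0 : ℝ) uStar, HasDerivWithinAt r (r' u) (Set.Icc 0 uStar) u)
    (hhderiv : ∀ u ∈ Set.Icc (0 : ℝ) uStar, HasDerivWithinAt h (h' u) (Set.Icc 0 uStar) u)
    (h1 : ∀ u ∈ Set.Icc (0 : ℝ) uStar, 0 < r u ∧ r u ≤ r₀ ∧ |r' u + 1| ≤ δ₀ * r u)
    (h2 : ∀ u ∈ Set.Icc (0 : ℝ) uStar, 0 ≤ h u ∧ h u ≤ H * δ⁻¹)
    (h3 : ∀ u ∈ Set.Icc (0 : ℝ) uStar, |k u + 2 / r u| ≤ δ₀)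
    (h4 : ∀ u ∈ Set.Icc (0 : ℝ) uStar, |h' u + k u * h u| ≤ δ₀ * δ⁻¹) :
    ∀ u ∈ Set.Icc (0 : ℝ) uStar,
      |r u ^ 2 * h u - r 0 ^ 2 * h 0| ≤ (3 * H + 1) * r₀ ^ 2 * δ₀ * δ⁻¹ * u :=
  fun u hu => (stmt10_general (c := -1) 2 hrderiv hhderiv (by simpa using h1)
    (fun v hv => (abs_of_nonneg (h2 v hv).1).trans_le (h2 v hv).2)
    (by simpa [neg_div] using h3) h4 u hu).trans_eq (by push_cast; ring)
end
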